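/- Let V = {α, β, γ, δ, ε} be five distinct vertices and let G be the simple graph on V in which every pair of distinct vertices is adjacent except the pair {α, β}. Suppose each vertex v is assigned a finite list L(v) of colors such that |L(α)| ≥ 2, |L(γ)| ≥ 2, |L(β)| ≥ 3, |L(δ)| ≥ 3 and |L(ε)| ≥ 4. Then there exists a proper coloring c of G (i.e., c(u) ≠ c(v) whenever u and v are adjacent in G) such that c(v) ∈ L(v) for every vertex v. -/

import Mathlib

/-!
If the lists of `α` and `β` share a color `x`, give `x` to both of these nonadjacent vertices; then
`γ`, `δ`, `ε` keep at least 1, 2, 3 colors and can be colored greedily in this order.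
Otherwise the two lists are disjoint, so their union has at least five colors, and Hall's
condition holds for the five lists: a subfamily containing both `L α` and `L β` has union of size
at least 5, and any other nonempty subfamily contains one list at least as large as its number of
members. Hall's theorem then colors all five vertices with distinct colors.
-/

/-- The case split behind Hall's condition for lists of sizes at least 2, 3, 2, 3, 4 indexed by
`0, …, 4`: unless `s` is empty or contains both `0` and `1`,
some single list with index in `s` has at least `s.card` colors. -/
lemma hall_cases : ∀ s : Finset (Fin 5),
    (0 ∈ s ∧ 1 ∈ s) ∨ (4 ∈ s ∧ s.card ≤ 4) ∨ (1 ∈ s ∧ s.card ≤ 3) ∨ (3 ∈ s ∧ s.card ≤ 3) ∨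
      (0 ∈ s ∧ s.card ≤ 2) ∨ (2 ∈ s ∧ s.card ≤ 2) ∨ s.card = 0 := by
  decide

lemma exists_distinct_colors {C : Type*} [DecidableEq C] (A B G D E : Finset C)
    (hA : 2 ≤ A.card) (hB : 3 ≤ B.card) (hG : 2 ≤ G.card) (hD : 3 ≤ D.card) (hE : 4 ≤ E.card)
    (hAB : Disjoint A B) :
    ∃ f : Fin 5 → C, Function.Injective f ∧ ∀ i, f i ∈ ![A, B, G, D, E] i := by
  refine (Finset.all_card_le_biUnion_card_iff_exists_injective _).1 fun s => ?_
  have single (i : Fin 5) (hi : i ∈ s) :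
      (![A, B, G, D, E] i).card ≤ (s.biUnion ![A, B, G, D, E]).card :=
    Finset.card_le_card (Finset.subset_biUnion_of_mem _ hi)
  rcases hall_cases s with ⟨h0, h1⟩ | ⟨h, hs⟩ | ⟨h, hs⟩ | ⟨h, hs⟩ | ⟨h, hs⟩ | ⟨h, hs⟩ | hs
  · have hsub : A ∪ B ⊆ s.biUnion ![A, B, G, D, E] :=
      Finset.union_subset (Finset.subset_biUnion_of_mem ![A, B, G, D, E] h0)
        (Finset.subset_biUnion_of_mem ![A, B, G, D, E] h1)
    have hcard := Finset.card_le_card hsub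
    rw [Finset.card_union_of_disjoint hAB] at hcard
    have hs : s.card ≤ 5 := by simpa using Finset.card_le_univ s
    omega
  · exact (hs.trans hE).trans (single 4 h)
  · exact (hs.trans hB).trans (single 1 h)
  · exact (hs.trans hD).trans (single 3 h)
  · exact (hs.trans hA).trans (single 0 h)
  · exact (hs.trans hG).trans (single 2 h)
  · omega

/-- The list-coloring claim in terms of the five colors themselves. -/
lemma exists_colors {C : Type*} [DecidableEq C] (A B G D E : Finset C)
    (hA : 2 ≤ A.card) (hB : 3 ≤ B.card) (hG : 2 ≤ G.card) (hD : 3 ≤ D.card) (hE : 4 ≤ E.card) :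
    ∃ a b g d e : C, (a ∈ A ∧ b ∈ B ∧ g ∈ G ∧ d ∈ D ∧ e ∈ E) ∧
      a ≠ g ∧ a ≠ d ∧ a ≠ e ∧ b ≠ g ∧ b ≠ d ∧ b ≠ e ∧ g ≠ d ∧ g ≠ e ∧ d ≠ e := by
  by_cases hAB : Disjoint A B
  · obtain ⟨f, hf, hm⟩ := exists_distinct_colors A B G D E hA hB hG hD hE hAB
    refine ⟨f 0, f 1, f 2, f 3, f 4, ⟨hm 0, hm 1, hm 2, hm 3, hm 4⟩, ?_⟩
    simp [hf.eq_iff]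
  · obtain ⟨x, hxA, hxB⟩ := Finset.not_disjoint_iff.1 hAB
    obtain ⟨g, hg, hgx⟩ := Finset.exists_mem_notMem_of_card_lt_card
      (s := {x}) (t := G) (by rw [Finset.card_singleton]; omega)
    obtain ⟨d, hd, hdx⟩ := Finset.exists_mem_notMem_of_card_lt_card
      (s := {x, g}) (t := D) (Finset.card_le_two.trans_lt (by omega))
    obtain ⟨e, he, hex⟩ := Finset.exists_mem_notMem_of_card_lt_card
      (s := {x, g, d}) (t := E) (Finset.card_le_three.trans_lt (by omega))
    simp only [Finset.mem_insert, Finset.mem_singleton, not_or] at hgx hdx hex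
    exact ⟨x, x, g, d, e, ⟨hxA, hxB, hg, hd, he⟩, by grind⟩

/-- List coloring of K₅ minus the edge αβ: if α and γ have lists of at least
two colors, β and δ have lists of at least three colors, and ε has a list of
at least four colors, then there is a proper coloring choosing each vertex's
color from its list (all pairs of distinct vertices are adjacent except the
pair {α, β}). -/
theorem list_coloring_K5_minus_edge {V C : Type*} [DecidableEq C]
    (α β γ δ ε : V)
    (hdist : ([α, β, γ, δ, ε] : List V).Pairwise (· ≠ ·))
    (L : V → Finset C)
    (hα : 2 ≤ (L α).card) (hγ : 2 ≤ (L γ).card)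
    (hβ : 3 ≤ (L β).card) (hδ : 3 ≤ (L δ).card)
    (hε : 4 ≤ (L ε).card) :
    ∃ c : V → C,
      (c α ∈ L α ∧ c β ∈ L β ∧ c γ ∈ L γ ∧ c δ ∈ L δ ∧ c ε ∈ L ε) ∧
      c α ≠ c γ ∧ c α ≠ c δ ∧ c α ≠ c ε ∧
      c β ≠ c γ ∧ c β ≠ c δ ∧ c β ≠ c ε ∧
      c γ ≠ c δ ∧ c γ ≠ c ε ∧ c δ ≠ c ε := by
  classical
  obtain ⟨a, b, g, d, e, hmem, hne⟩ :=
    exists_colors (L α) (L β) (L γ) (L δ) (L ε) hα hβ hγ hδ hε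
  simp only [List.pairwise_cons, List.mem_cons, List.not_mem_nil, or_false, forall_eq_or_imp,
    forall_eq] at hdist
  obtain ⟨⟨hab, hag, had, hae⟩, ⟨hbg, hbd, hbe⟩, ⟨hgd, hge⟩, hde, -⟩ := hdist
  refine ⟨fun v => if v = α then a else if v = β then b else if v = γ then g
    else if v = δ then d else e, ?_⟩
  simp only [if_true, hab.symm, hag.symm, had.symm, hae.symm, hbg.symm, hbd.symm, hbe.symm,
    hgd.symm, hge.symm, hde.symm, if_false]
  exact ⟨hmem, hne⟩
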